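/- arXiv:1905.12458 — 2 statements merged into one kernel-verified Lean document; each statement's English description precedes it below -/
import Mathlib

section
/- Fix n ≥ 1. Let R be the polynomial ring over ℂ in 4n(n+1) indeterminates a^{(1)}_{st}, a^{(2)}_{st} (1 ≤ s ≤ n+1, 1 ≤ t ≤ n) and b^{(1)}_{ts}, b^{(2)}_{ts} (1 ≤ t ≤ n, 1 ≤ s ≤ n+1), and let A_1, A_2 be the (n+1) × n matrices with entries a^{(1)}_{st}, a^{(2)}_{st} and B_1, B_2 the n × (n+1) matrices with entries b^{(1)}_{ts}, b^{(2)}_{ts}, regarded as matrices over R. Then the polynomial trace(A_1·B_1·A_2·B_2) − trace(A_1·B_2·A_2·B_1) ∈ R is squarefree (in particular nonzero). -/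
/-!
Every monomial of the superpotential uses one coordinate of each of the four arrows. Hence the
superpotential has degree at most one in every coordinate, and since degrees are additive over a
domain, a factor occurring twice is a constant. For `(s, t) ≠ (s', t')`, the superpotential takes
the value `1` at the point where the coordinates in the monomial
`a^{(1)}_{st} b^{(1)}_{ts'} a^{(2)}_{s't'} b^{(2)}_{t's}` are `1` and all others are `0`, so this
constant is a unit.
-/

open MvPolynomial Matrix

/-- The indexing type for the `4n(n+1)` indeterminates: the left summand indexes the entries
`a^{(1)}_{st}, a^{(2)}_{st}` (with `1 ≤ s ≤ n+1`, `1 ≤ t ≤ n`), the right summand the entries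
`b^{(1)}_{ts}, b^{(2)}_{ts}` (with `1 ≤ t ≤ n`, `1 ≤ s ≤ n+1`). -/
abbrev ConVar (n : ℕ) : Type :=
  (Fin 2 × Fin (n + 1) × Fin n) ⊕ (Fin 2 × Fin n × Fin (n + 1))

/-- The generic `(n+1) × n` matrix `A_k` (for `k = 1, 2`) whose entries are the
indeterminates `a^{(k)}_{st}`. -/
noncomputable def Amat (n : ℕ) (k : Fin 2) :
    Matrix (Fin (n + 1)) (Fin n) (MvPolynomial (ConVar n) ℂ) :=
  Matrix.of fun s t => MvPolynomial.X (Sum.inl (k, s, t))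

/-- The generic `n × (n+1)` matrix `B_k` (for `k = 1, 2`) whose entries are the
indeterminates `b^{(k)}_{ts}`. -/
noncomputable def Bmat (n : ℕ) (k : Fin 2) :
    Matrix (Fin n) (Fin (n + 1)) (MvPolynomial (ConVar n) ℂ) :=
  Matrix.of fun t s => MvPolynomial.X (Sum.inr (k, t, s))

section DegreeAtMostOne

variable {σ R : Type*}

lemma eq_C_of_degreeOf_eq_zero [CommSemiring R] {g : MvPolynomial σ R}
    (hg : ∀ i, degreeOf i g = 0) : g = C (coeff 0 g) := by
  classical
  refine vars_eq_empty_iff_eq_C.mp (Finset.eq_empty_of_forall_notMem fun i hi => ?_)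
  rw [vars_def, Multiset.mem_toFinset, ← Multiset.count_pos, ← degreeOf_def] at hi
  exact hi.ne' (hg i)

lemma degreeOf_eq_zero_of_mul_self_dvd [CommSemiring R] [NoZeroDivisors R]
    {f g : MvPolynomial σ R} {i : σ} (hf : f ≠ 0) (hdeg : degreeOf i f ≤ 1) (hgf : g * g ∣ f) :
    degreeOf i g = 0 := by
  obtain ⟨q, rfl⟩ := hgf
  have hgg : g * g ≠ 0 := left_ne_zero_of_mul hf
  have hg : g ≠ 0 := left_ne_zero_of_mul hgg
  rw [degreeOf_mul_eq hgg (right_ne_zero_of_mul hf), degreeOf_mul_eq hg hg] at hdeg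
  lia

lemma squarefree_of_degreeOf_le_one_of_isUnit_eval [CommSemiring R] [NoZeroDivisors R]
    [Nontrivial R] {f : MvPolynomial σ R} (hdeg : ∀ i, degreeOf i f ≤ 1) {x : σ → R}
    (hx : IsUnit (eval x f)) : Squarefree f := by
  intro g hgf
  have hf : f ≠ 0 := by
    rintro rfl
    exact hx.ne_zero (map_zero _)
  have hg : g = C (coeff 0 g) :=
    eq_C_of_degreeOf_eq_zero fun i => degreeOf_eq_zero_of_mul_self_dvd hf (hdeg i) hgf
  have hunit : IsUnit (eval x g) :=
    isUnit_of_dvd_unit (map_dvd (eval x) (dvd_of_mul_left_dvd hgf)) hx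
  rw [hg, eval_C] at hunit
  rw [hg]
  exact hunit.map C

end DegreeAtMostOne

section MatrixDegree

variable {σ R l m n : Type*} [CommSemiring R] [Fintype m] {i : σ} {d e : ℕ}

lemma degreeOf_matrix_mul_le {M : Matrix l m (MvPolynomial σ R)} {N : Matrix m n (MvPolynomial σ R)}
    (hM : ∀ s t, degreeOf i (M s t) ≤ d) (hN : ∀ t u, degreeOf i (N t u) ≤ e) (s : l) (u : n) :
    degreeOf i ((M * N) s u) ≤ d + e := by
  rw [Matrix.mul_apply]
  refine (degreeOf_sum_le i _ _).trans (Finset.sup_le fun t _ => ?_)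
  exact (degreeOf_mul_le i _ _).trans (add_le_add (hM s t) (hN t u))

lemma degreeOf_matrix_trace_le {M : Matrix m m (MvPolynomial σ R)}
    (hM : ∀ s, degreeOf i (M s s) ≤ d) : degreeOf i M.trace ≤ d :=
  (degreeOf_sum_le i _ _).trans (Finset.sup_le fun s _ => hM s)

end MatrixDegree

section GenericRepresentation

/-- Coordinates on the representations of the conifold quiver: entries of the two `m × n` matrices
on the left, entries of the two `n × m` matrices on the right. -/
abbrev RepCoord (m n : Type*) : Type _ :=
  (Fin 2 × m × n) ⊕ (Fin 2 × n × m)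

/-- The arrow of the conifold quiver to which a coordinate belongs, the arrows being
`a_k = Sum.inl k` and `b_k = Sum.inr k`. Its fibres are the blocks of the four-torus grading. -/
def RepCoord.arrow {m n : Type*} : RepCoord m n → Fin 2 ⊕ Fin 2 :=
  Sum.map Prod.fst Prod.fst

variable (R m n : Type*) [CommSemiring R]

/-- The generic matrix of the arrow `a_k`. -/
noncomputable def genericA (k : Fin 2) : Matrix m n (MvPolynomial (RepCoord m n) R) :=
  Matrix.of fun s t => X (Sum.inl (k, s, t))

/-- The generic matrix of the arrow `b_k`. -/
noncomputable def genericB (k : Fin 2) : Matrix n m (MvPolynomial (RepCoord m n) R) :=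
  Matrix.of fun t s => X (Sum.inr (k, t, s))

variable {R m n}

/-- The values of the coordinates at the representation `(A, B)`. -/
def RepCoord.valuesAt {α : Type*} (A : Fin 2 → Matrix m n α) (B : Fin 2 → Matrix n m α) :
    RepCoord m n → α :=
  Sum.elim (fun p => A p.1 p.2.1 p.2.2) (fun p => B p.1 p.2.1 p.2.2)

lemma genericA_map_eval (A : Fin 2 → Matrix m n R) (B : Fin 2 → Matrix n m R) (k : Fin 2) :
    (genericA R m n k).map (eval (RepCoord.valuesAt A B)) = A k := by
  ext s t
  simp [genericA, RepCoord.valuesAt]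

lemma genericB_map_eval (A : Fin 2 → Matrix m n R) (B : Fin 2 → Matrix n m R) (k : Fin 2) :
    (genericB R m n k).map (eval (RepCoord.valuesAt A B)) = B k := by
  ext t s
  simp [genericB, RepCoord.valuesAt]

variable [Nontrivial R] {i : RepCoord m n}

lemma degreeOf_genericA_le (k : Fin 2) (s : m) (t : n) :
    degreeOf i (genericA R m n k s t) ≤ if i.arrow = Sum.inl k then 1 else 0 := by
  classical
  rw [genericA, Matrix.of_apply, degreeOf_X]
  split_ifs <;> simp_all [RepCoord.arrow]

lemma degreeOf_genericB_le (k : Fin 2) (t : n) (s : m) :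
    degreeOf i (genericB R m n k t s) ≤ if i.arrow = Sum.inr k then 1 else 0 := by
  classical
  rw [genericB, Matrix.of_apply, degreeOf_X]
  split_ifs <;> simp_all [RepCoord.arrow]

variable [Fintype m] [Fintype n]

lemma degreeOf_trace_generic_le_one {k l k' l' : Fin 2} (hk : k ≠ k') (hl : l ≠ l') :
    degreeOf i (genericA R m n k * genericB R m n l * genericA R m n k' * genericB R m n l').trace
      ≤ 1 := by
  have harrow : (if i.arrow = Sum.inl k then 1 else 0) + (if i.arrow = Sum.inr l then 1 else 0) +
      (if i.arrow = Sum.inl k' then 1 else 0) + (if i.arrow = Sum.inr l' then 1 else 0) ≤ 1 := by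
    split_ifs <;> simp_all
  have hAB := degreeOf_matrix_mul_le (degreeOf_genericA_le (R := R) (i := i) k)
    (degreeOf_genericB_le l)
  have hABA := degreeOf_matrix_mul_le hAB (degreeOf_genericA_le k')
  have hABAB := degreeOf_matrix_mul_le hABA (degreeOf_genericB_le l')
  exact (degreeOf_matrix_trace_le fun s => hABAB s s).trans harrow

end GenericRepresentation

section Superpotential

variable {R S m n : Type*} [CommRing R] [CommRing S] [Fintype m] [Fintype n]

/-- The Klebanov–Witten superpotential `tr(A₁B₁A₂B₂) − tr(A₁B₂A₂B₁)` of a representation of the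
conifold quiver, with arrows numbered from `0`. -/
def superpotential (A : Fin 2 → Matrix m n R) (B : Fin 2 → Matrix n m R) : R :=
  (A 0 * B 0 * A 1 * B 1).trace - (A 0 * B 1 * A 1 * B 0).trace

lemma map_superpotential (φ : R →+* S) (A : Fin 2 → Matrix m n R) (B : Fin 2 → Matrix n m R) :
    φ (superpotential A B) =
      superpotential (fun k => (A k).map φ) (fun k => (B k).map φ) := by
  simp only [superpotential, map_sub, AddMonoidHom.map_trace, Matrix.map_mul]

lemma superpotential_single [DecidableEq m] [DecidableEq n] {s s' : m} {t t' : n}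
    (h : (s, t) ≠ (s', t')) :
    superpotential ![single s t (1 : R), single s' t' 1] ![single t s' 1, single t' s 1] = 1 := by
  -- The first trace is `1`; the second vanishes unless both `t = t'` and `s = s'`.
  rcases eq_or_ne t t' with rfl | ht
  · have hs : s ≠ s' := fun hs => h (Prod.ext hs rfl)
    simp [superpotential, hs]
  · simp [superpotential, ht]

lemma eval_superpotential_generic (A : Fin 2 → Matrix m n R) (B : Fin 2 → Matrix n m R) :
    eval (RepCoord.valuesAt A B) (superpotential (genericA R m n) (genericB R m n)) =
      superpotential A B := by
  simp only [map_superpotential, genericA_map_eval, genericB_map_eval]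

lemma degreeOf_superpotential_generic_le_one [Nontrivial R] (i : RepCoord m n) :
    degreeOf i (superpotential (genericA R m n) (genericB R m n)) ≤ 1 :=
  (degreeOf_sub_le i _ _).trans <| max_le
    (degreeOf_trace_generic_le_one zero_ne_one zero_ne_one)
    (degreeOf_trace_generic_le_one zero_ne_one one_ne_zero)

end Superpotential

theorem conifold_superpotential_squarefree_general (R m n : Type*) [CommRing R] [IsDomain R]
    [Fintype m] [Fintype n] [Nontrivial (m × n)] :
    Squarefree (superpotential (genericA R m n) (genericB R m n)) := by
  classical
  obtain ⟨⟨s, t⟩, ⟨s', t'⟩, hne⟩ := exists_pair_ne (m × n)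
  refine squarefree_of_degreeOf_le_one_of_isUnit_eval degreeOf_superpotential_generic_le_one
    (x := RepCoord.valuesAt ![single s t 1, single s' t' 1] ![single t s' 1, single t' s 1]) ?_
  rw [eval_superpotential_generic, superpotential_single hne]
  exact isUnit_one

/-- The trace of the Klebanov–Witten superpotential
`trace(A₁B₁A₂B₂) − trace(A₁B₂A₂B₁)` is a squarefree polynomial. -/
theorem conifold_superpotential_squarefree (n : ℕ) (hn : 1 ≤ n) :
    Squarefree ((Amat n 0 * Bmat n 0 * Amat n 1 * Bmat n 1).trace
      - (Amat n 0 * Bmat n 1 * Amat n 1 * Bmat n 0).trace) := by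
  obtain ⟨m, rfl⟩ := Nat.exists_eq_add_of_le' hn
  exact conifold_superpotential_squarefree_general ℂ (Fin (m + 1 + 1)) (Fin (m + 1))
end

section
/- Let R = ℂ[x, y, z], let I_L = (x, y) and I_Z = (x², xy, y², xz, yz) be ideals of R, so that I_Z ⊆ I_L, and regard I_Z and the quotient I_L/I_Z as R-modules. Then the ℂ-vector space Hom_R(I_Z, I_L/I_Z) is finite dimensional of dimension 10. -/
open MvPolynomial

noncomputable section

/-- The polynomial ring `ℂ[x, y, z]`, with `x = X 0`, `y = X 1`, `z = X 2`. -/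
abbrev Rxyz : Type := MvPolynomial (Fin 3) ℂ

/-- The ideal `I_L = (x, y)`. -/
def IL : Ideal Rxyz := Ideal.span {X 0, X 1}

/-- The ideal `I_Z = (x², xy, y², xz, yz)`. -/
def IZ : Ideal Rxyz :=
  Ideal.span {X 0 * X 0, X 0 * X 1, X 1 * X 1, X 0 * X 2, X 1 * X 2}

/-- The quotient module `I_L / I_Z`, with `I_Z` regarded as a submodule of `I_L`. -/
abbrev ILmodIZ : Type := IL ⧸ (Submodule.comap IL.subtype IZ)

/-!
Let `𝔪 = (x, y, z)`. Since `I_Z = 𝔪 I_L`, the variables act as zero on `I_L / I_Z`, so an `R`-linear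
map `I_Z → I_L / I_Z` amounts to a `ℂ`-linear map `I_Z / 𝔪 I_Z → I_L / 𝔪 I_L`. For a monomial
ideal `J`, the quotient `J / 𝔪 J` has the minimal monomial generators of `J` as a basis, because
taking the coefficients at these generators kills `𝔪 J`. Hence the dimension is `5 * 2`.
-/

section CommSemiring

variable {σ ι K M : Type*} [CommSemiring K]

variable (K) in
/-- The ideal of `K[X_s : s ∈ σ]` generated by the monomials with exponents `a i`, `i : ι`. The
generators are minimal when no exponent is bounded by another, which is expressed below as
`Pairwise fun i j ↦ ¬ a i ≤ a j`. -/
def monomialIdeal (a : ι → σ →₀ ℕ) : Ideal (MvPolynomial σ K) :=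
  Ideal.span (Set.range fun i ↦ monomial (a i) 1)

theorem injective_of_pairwise_not_le {α : Type*} [Preorder α] {a : ι → α}
    (ha : Pairwise fun i j ↦ ¬ a i ≤ a j) : Function.Injective a :=
  fun _ _ h ↦ by_contra fun hij ↦ ha hij h.le

theorem smul_eq_constantCoeff_smul [AddCommMonoid M] [Module (MvPolynomial σ K) M] [Module K M]
    [IsScalarTower K (MvPolynomial σ K) M]
    (hM : idealOfVars σ K ≤ Module.annihilator (MvPolynomial σ K) M)
    (r : MvPolynomial σ K) (v : M) : r • v = constantCoeff r • v := by
  induction r using MvPolynomial.induction_on with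
  | C c => rw [constantCoeff_C, ← algebraMap_eq, algebraMap_smul]
  | add p q hp hq => rw [add_smul, hp, hq, map_add, add_smul]
  | mul_X p s _ =>
    have hX : (X s : MvPolynomial σ K) • v = 0 :=
      Module.mem_annihilator.1 (hM (Ideal.subset_span ⟨s, rfl⟩)) v
    rw [mul_smul, hX, smul_zero, map_mul, constantCoeff_X, mul_zero, zero_smul]

namespace monomialIdeal

variable {a : ι → σ →₀ ℕ}

variable (K a) in
/-- The monomial with exponent `a i`, as an element of the ideal it helps generate. -/
def gen (i : ι) : monomialIdeal K a :=
  ⟨monomial (a i) 1, Ideal.subset_span ⟨i, rfl⟩⟩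

theorem span_range_gen : Submodule.span (MvPolynomial σ K) (Set.range (gen K a)) = ⊤ := by
  refine Submodule.map_injective_of_injective (monomialIdeal K a).subtype_injective ?_
  rw [Submodule.map_span, ← Set.range_comp, Submodule.map_subtype_top]
  rfl

theorem exists_le_of_coeff_ne_zero {f : MvPolynomial σ K} (hf : f ∈ monomialIdeal K a)
    {m : σ →₀ ℕ} (hm : coeff m f ≠ 0) : ∃ i, a i ≤ m := by
  rw [monomialIdeal, Set.range_comp' (fun m ↦ monomial m (1 : K)) a,
    mem_ideal_span_monomial_image] at hf
  simpa only [Set.exists_range_iff] using hf m (mem_support_iff.2 hm)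

theorem coeff_mul_of_mem (ha : Pairwise fun i j ↦ ¬ a i ≤ a j) {f : MvPolynomial σ K}
    (hf : f ∈ monomialIdeal K a) (r : MvPolynomial σ K) (i : ι) :
    coeff (a i) (r * f) = constantCoeff r * coeff (a i) f := by
  classical
  rw [coeff_mul, constantCoeff_eq]
  refine Finset.sum_eq_single (0, a i) (fun ⟨p, q⟩ hpq hne ↦ ?_) (by simp)
  rw [Finset.HasAntidiagonal.mem_antidiagonal] at hpq
  by_contra hcoeff
  obtain ⟨j, hj⟩ := exists_le_of_coeff_ne_zero hf (right_ne_zero_of_mul hcoeff)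
  have hq : q ≤ a i := hpq ▸ le_add_self
  obtain rfl : j = i := by_contra fun hji ↦ ha hji (hj.trans hq)
  obtain rfl : q = a j := hq.antisymm hj
  exact hne (Prod.ext (add_eq_right.1 hpq) rfl)

/-- The coefficients of `f` at the minimal generators of a monomial ideal. By
`coeff_mul_of_mem` they depend semilinearly on `f`, with respect to `constantCoeff`. -/
def genCoeffs (ha : Pairwise fun i j ↦ ¬ a i ≤ a j) :
    monomialIdeal K a →ₛₗ[(constantCoeff : MvPolynomial σ K →+* K)] ι →₀ K where
  toFun f := Finsupp.comapDomain a ((basisMonomials σ K).repr f.1)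
    (injective_of_pairwise_not_le ha).injOn
  map_add' f g := by ext i; exact coeff_add (a i) f.1 g.1
  map_smul' r f := by ext i; exact coeff_mul_of_mem ha f.2 r i

theorem genCoeffs_apply (ha : Pairwise fun i j ↦ ¬ a i ≤ a j) (f : monomialIdeal K a) (i : ι) :
    genCoeffs ha f i = coeff (a i) (f : MvPolynomial σ K) :=
  rfl

theorem genCoeffs_gen (ha : Pairwise fun i j ↦ ¬ a i ≤ a j) (i : ι) :
    genCoeffs ha (gen K a i) = Finsupp.single i 1 := by
  classical
  ext j
  rw [genCoeffs_apply, gen, coeff_monomial, Finsupp.single_apply]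
  simp only [(injective_of_pairwise_not_le ha).eq_iff]

section KilledByVariables

variable [AddCommMonoid M] [Module (MvPolynomial σ K) M] [Module K M]
  [IsScalarTower K (MvPolynomial σ K) M] (ha : Pairwise fun i j ↦ ¬ a i ≤ a j)
  (hM : idealOfVars σ K ≤ Module.annihilator (MvPolynomial σ K) M)

/-- The linear map from a monomial ideal to a module killed by the variables that takes prescribed
values on the minimal generators. -/
def lift (v : ι → M) : monomialIdeal K a →ₗ[MvPolynomial σ K] M where
  toFun f := Finsupp.linearCombination K v (genCoeffs ha f)
  map_add' f g := by rw [map_add, map_add]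
  map_smul' r f := by
    rw [map_smulₛₗ, map_smul, RingHom.id_apply, smul_eq_constantCoeff_smul hM]

theorem lift_apply (v : ι → M) (f : monomialIdeal K a) :
    lift ha hM v f = Finsupp.linearCombination K v (genCoeffs ha f) :=
  rfl

theorem lift_gen (v : ι → M) (i : ι) : lift ha hM v (gen K a i) = v i := by
  rw [lift_apply, genCoeffs_gen, Finsupp.linearCombination_single, one_smul]

theorem lift_map_gen (φ : monomialIdeal K a →ₗ[MvPolynomial σ K] M) :
    lift ha hM (fun i ↦ φ (gen K a i)) = φ :=
  LinearMap.ext_on_range span_range_gen (lift_gen ha hM _)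

/-- The `R`-linear maps from a monomial ideal of `R` to a module killed by the variables correspond
to the families of values on the minimal generators. -/
def homEquiv : (monomialIdeal K a →ₗ[MvPolynomial σ K] M) ≃ₗ[K] (ι → M) where
  toFun φ i := φ (gen K a i)
  map_add' _ _ := rfl
  map_smul' _ _ := rfl
  invFun := lift ha hM
  left_inv := lift_map_gen ha hM
  right_inv v := funext (lift_gen ha hM v)

end KilledByVariables

end monomialIdeal

end CommSemiring

section CommRing

variable {σ ι κ K : Type*} [CommRing K]

theorem le_annihilator_quotient_mul {R : Type*} [CommRing R] (m J : Ideal R) :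
    m ≤ Module.annihilator R (J ⧸ Submodule.comap J.subtype (m * J)) := by
  intro r hr
  rw [Module.mem_annihilator]
  rintro ⟨f⟩
  exact (Submodule.Quotient.mk_eq_zero _).2 (Ideal.mul_mem_mul hr f.2)

namespace monomialIdeal

variable {a : ι → σ →₀ ℕ}

theorem comap_idealOfVars_mul_le_ker_genCoeffs (ha : Pairwise fun i j ↦ ¬ a i ≤ a j) :
    Submodule.comap (monomialIdeal K a).subtype (idealOfVars σ K * monomialIdeal K a) ≤
      LinearMap.ker (genCoeffs (K := K) ha) := by
  intro f hf
  ext i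
  rw [genCoeffs_apply, Finsupp.zero_apply]
  refine Submodule.mul_induction_on (C := fun g ↦ coeff (a i) g = 0) hf (fun r hr g hg ↦ ?_)
    fun g h hg hh ↦ by rw [coeff_add, hg, hh, add_zero]
  have hr0 : constantCoeff r = 0 := by
    have hle : idealOfVars σ K ≤ RingHom.ker constantCoeff :=
      Ideal.span_le.2 (Set.range_subset_iff.2 (constantCoeff_X K))
    exact hle hr
  rw [coeff_mul_of_mem ha hg, hr0, zero_mul]

/-- The minimal generators of a monomial ideal `J` form a basis of `J / 𝔪J`, where `𝔪` is the
ideal of the origin. -/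
def quotientBasis (ha : Pairwise fun i j ↦ ¬ a i ≤ a j) :
    Module.Basis ι K (monomialIdeal K a ⧸
      Submodule.comap (monomialIdeal K a).subtype (idealOfVars σ K * monomialIdeal K a)) :=
  let N := Submodule.comap (monomialIdeal K a).subtype (idealOfVars σ K * monomialIdeal K a)
  let hN := le_annihilator_quotient_mul (idealOfVars σ K) (monomialIdeal K a)
  let coeffs := N.liftQ (genCoeffs ha) (comap_idealOfVars_mul_le_ker_genCoeffs ha)
  .ofRepr
  { toFun := coeffs
    map_add' := map_add coeffs
    map_smul' c v := by
      rw [← algebraMap_smul (MvPolynomial σ K) c v, map_smulₛₗ, algebraMap_eq, constantCoeff_C]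
      rfl
    invFun := Finsupp.linearCombination K fun i ↦ N.mkQ (gen K a i)
    left_inv v := by
      obtain ⟨f, rfl⟩ := N.mkQ_surjective v
      exact LinearMap.congr_fun (lift_map_gen ha hN N.mkQ) f
    right_inv c := by
      induction c using Finsupp.induction_linear with
      | zero => simp
      | add c d hc hd => rw [map_add, map_add, hc, hd]
      | single i c =>
        rw [Finsupp.linearCombination_single, ← algebraMap_smul (MvPolynomial σ K), map_smulₛₗ]
        simp [coeffs, genCoeffs_gen] }

end monomialIdeal

theorem hom_IZ_to_ILmodIZ_dim_ten_general [Nontrivial K] [Fintype ι] [Fintype κ]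
    {a : ι → σ →₀ ℕ} {b : κ → σ →₀ ℕ} (ha : Pairwise fun i j ↦ ¬ a i ≤ a j)
    (hb : Pairwise fun i j ↦ ¬ b i ≤ b j) {I J : Ideal (MvPolynomial σ K)}
    (hI : I = monomialIdeal K a) (hJ : J = monomialIdeal K b) (hIJ : I = idealOfVars σ K * J) :
    I ≤ J ∧
    Module.Finite K (I →ₗ[MvPolynomial σ K] J ⧸ Submodule.comap J.subtype I) ∧
    Module.finrank K (I →ₗ[MvPolynomial σ K] J ⧸ Submodule.comap J.subtype I) =
      Fintype.card ι * Fintype.card κ := by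
  have hann : idealOfVars σ K ≤
      Module.annihilator (MvPolynomial σ K) (J ⧸ Submodule.comap J.subtype I) :=
    hIJ ▸ le_annihilator_quotient_mul _ J
  obtain ⟨basis⟩ : Nonempty (Module.Basis κ K (J ⧸ Submodule.comap J.subtype I)) := by
    rw [hIJ, hJ]
    exact ⟨monomialIdeal.quotientBasis hb⟩
  have hle : I ≤ J := hIJ ▸ Ideal.mul_le_right
  subst hI
  let e := (monomialIdeal.homEquiv ha hann).trans (.piCongrRight fun _ ↦ basis.equivFun)
  refine ⟨hle, .equiv e.symm, ?_⟩
  simp [e.finrank_eq, Module.finrank_pi_fintype]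

end CommRing

theorem monomial_equivFunOnFinite_symm {σ K : Type*} [Fintype σ] [CommSemiring K] (t : σ → ℕ) :
    monomial (Finsupp.equivFunOnFinite.symm t) (1 : K) = ∏ s, X s ^ t s := by
  rw [monomial_eq, C_1, one_mul, Finsupp.prod_fintype _ _ fun s ↦ pow_zero (X s)]
  rfl

/-- The exponents of the generators `x`, `y` of `I_L`. -/
def expL : Fin 2 → Fin 3 → ℕ := ![![1, 0, 0], ![0, 1, 0]]

/-- The exponents of the generators `x²`, `xy`, `y²`, `xz`, `yz` of `I_Z`. -/
def expZ : Fin 5 → Fin 3 → ℕ :=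
  ![![2, 0, 0], ![1, 1, 0], ![0, 2, 0], ![1, 0, 1], ![0, 1, 1]]

theorem pairwise_not_expL_le :
    Pairwise fun i j ↦
      ¬ Finsupp.equivFunOnFinite.symm (expL i) ≤ Finsupp.equivFunOnFinite.symm (expL j) := by
  change ∀ i j, i ≠ j → ¬ ∀ s, expL i s ≤ expL j s
  decide

theorem pairwise_not_expZ_le :
    Pairwise fun i j ↦
      ¬ Finsupp.equivFunOnFinite.symm (expZ i) ≤ Finsupp.equivFunOnFinite.symm (expZ j) := by
  change ∀ i j, i ≠ j → ¬ ∀ s, expZ i s ≤ expZ j s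
  decide

theorem IL_eq_monomialIdeal :
    IL = monomialIdeal ℂ fun i ↦ Finsupp.equivFunOnFinite.symm (expL i) := by
  simp only [IL, monomialIdeal, monomial_equivFunOnFinite_symm, Fin.prod_univ_three]
  congr 1
  ext f
  simp [expL, Fin.exists_fin_succ, eq_comm]

theorem IZ_eq_monomialIdeal :
    IZ = monomialIdeal ℂ fun i ↦ Finsupp.equivFunOnFinite.symm (expZ i) := by
  simp only [IZ, monomialIdeal, monomial_equivFunOnFinite_symm, Fin.prod_univ_three]
  congr 1
  ext f
  simp [expZ, Fin.exists_fin_succ, eq_comm, sq]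

theorem IZ_eq_idealOfVars_mul_IL : IZ = idealOfVars (Fin 3) ℂ * IL := by
  have range_X : Set.range (X : Fin 3 → Rxyz) = {X 0, X 1, X 2} := by
    ext f
    simp [Fin.exists_fin_succ, eq_comm]
  rw [IZ, IL, idealOfVars, range_X, Ideal.span_mul_span']
  congr 1
  ext f
  simp only [Set.mem_mul, Set.mem_insert_iff, Set.mem_singleton_iff, exists_eq_or_imp,
    exists_eq_left]
  grind

/-- `I_Z ⊆ I_L`, and the `ℂ`-vector space `Hom_R(I_Z, I_L/I_Z)` is finite dimensional
of dimension `10`. -/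
theorem hom_IZ_to_ILmodIZ_dim_ten :
    IZ ≤ IL ∧
    FiniteDimensional ℂ (IZ →ₗ[Rxyz] ILmodIZ) ∧
    Module.finrank ℂ (IZ →ₗ[Rxyz] ILmodIZ) = 10 := by
  simpa using hom_IZ_to_ILmodIZ_dim_ten_general pairwise_not_expZ_le pairwise_not_expL_le
    IZ_eq_monomialIdeal IL_eq_monomialIdeal IZ_eq_idealOfVars_mul_IL

end
end
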